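/- Let t1,…,tn be algebraic terms (not necessarily linear) and σ a substitution. (1) If tiσ ▷β ui for all i ∈ {1,…,n}, then there is a substitution σ' with σ(x) ▷β σ'(x) for all x and ui ▷β tiσ' for all i. (2) If tiσ →β* ui for all i ∈ {1,…,n}, then there is a substitution σ' with σ(x) →β* σ'(x) for all x and ui →β* tiσ' for all i. -/

import Mathlib

/-!
The substitution `σ'` is obtained from `σ` by complete developments (Takahashi). Let `cd t` be the
result of contracting simultaneously all β-redexes of `t`. Two facts carry the proof.

* Triangle property (`SPBeta.triangle`): if `t ▷β u` then `u ▷β cd t`. Iterating it, if `t →β* u`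
  then `u →β* cd^n t` for all large enough `n` (`exists_reds_iterate_cd`).
* For an algebraic `t`, a subterm in function position of `tσ` that is not inside some `σ x` is
  headed by a symbol, hence is never an abstraction, so instantiating `t` creates no redex and
  `cd (tσ) = t(cd ∘ σ)` (`cd_subst_algebraic`).

Since `σ' = cd ∘ σ` depends on `σ` only, it serves all the `tᵢ` and all occurrences of a
variable at once, which is why linearity is not needed. For `→β*`, `σ' = cd^n ∘ σ` works with `n`
the maximum of the bounds obtained for the finitely many `tᵢ`.

The triangle property is proved for the relation `SPBeta`, which is `PBeta` without its
substitution rule; this rule is admissible (`SPBeta.subst`), so the two relations coincide.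
-/

set_option autoImplicit false

/-- λ-terms over a signature `Sig`, in de Bruijn representation
(terms are identified up to α-conversion). -/
inductive Tm (Sig : Type) : Type
  | var : ℕ → Tm Sig
  | app : Tm Sig → Tm Sig → Tm Sig
  | lam : Tm Sig → Tm Sig
  | sym : Sig → Tm Sig

namespace Tm

variable {Sig : Type}

/-- Shift the free de Bruijn indices `≥ d` up by one. -/
def lift (d : ℕ) : Tm Sig → Tm Sig
  | var n => if n < d then var n else var (n + 1)
  | app t u => app (lift d t) (lift d u)
  | lam t => lam (lift (d + 1) t)
  | sym f => sym f

/-- Lift a parallel substitution under one binder. -/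
def up (σ : ℕ → Tm Sig) : ℕ → Tm Sig
  | 0 => var 0
  | n + 1 => lift 0 (σ n)

/-- Capture-avoiding (parallel) substitution. -/
def subst (σ : ℕ → Tm Sig) : Tm Sig → Tm Sig
  | var n => σ n
  | app t u => app (subst σ t) (subst σ u)
  | lam t => lam (subst (up σ) t)
  | sym f => sym f

def scons (u : Tm Sig) (σ : ℕ → Tm Sig) : ℕ → Tm Sig
  | 0 => u
  | n + 1 => σ n

/-- `subst1 u t` substitutes `u` for the de Bruijn variable `0` in `t`. -/
def subst1 (u t : Tm Sig) : Tm Sig := subst (scons u var) t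

/-- `FVar t n` : de Bruijn index `n` occurs free in `t`. -/
def FVar : Tm Sig → ℕ → Prop
  | var m, n => m = n
  | app t u, n => FVar t n ∨ FVar u n
  | lam t, n => FVar t (n + 1)
  | sym _, _ => False

/-- Closed terms. -/
def ClosedTm (t : Tm Sig) : Prop := ∀ n, ¬ FVar t n

def countVar : Tm Sig → ℕ → ℕ
  | var m, n => if m = n then 1 else 0
  | app t u, n => countVar t n + countVar u n
  | lam t, n => countVar t (n + 1)
  | sym _, _ => 0

/-- Linear terms: each variable occurs at most once. -/
def LinearTm (t : Tm Sig) : Prop := ∀ n, countVar t n ≤ 1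

/-- `appList h [t1, …, tn] = h t1 … tn`. -/
def appList (h : Tm Sig) : List (Tm Sig) → Tm Sig
  | [] => h
  | u :: us => appList (app h u) us

/-- Applicative terms: terms containing no abstraction. -/
inductive Applicative : Tm Sig → Prop
  | var (n : ℕ) : Applicative (var n)
  | sym (f : Sig) : Applicative (sym f)
  | app {t u : Tm Sig} : Applicative t → Applicative u → Applicative (app t u)

/-- Algebraic terms: `t ::= x | f t1 … tn`. -/
inductive Algebraic : Tm Sig → Prop
  | var (n : ℕ) : Algebraic (var n)
  | symApp (f : Sig) (ts : List (Tm Sig)) :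
      (∀ t ∈ ts, Algebraic t) → Algebraic (appList (sym f) ts)

/-- `Subterm s t` : `s` is a subterm of `t`. -/
inductive Subterm : Tm Sig → Tm Sig → Prop
  | refl (t : Tm Sig) : Subterm t t
  | appL {s t u : Tm Sig} : Subterm s t → Subterm s (app t u)
  | appR {s t u : Tm Sig} : Subterm s u → Subterm s (app t u)
  | lam {s t : Tm Sig} : Subterm s t → Subterm s (lam t)

/-- `lamN m t = λ…λ.t` with `m` abstractions. -/
def lamN : ℕ → Tm Sig → Tm Sig
  | 0, t => t
  | m + 1, t => lam (lamN m t)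

end Tm

/-- β-reduction: the smallest rewrite relation (closed under abstraction, left and
right application and substitution) with `(λ.t) u →β t[0 := u]`. -/
inductive Beta {Sig : Type} : Tm Sig → Tm Sig → Prop
  | beta (t u : Tm Sig) : Beta (Tm.app (Tm.lam t) u) (Tm.subst1 u t)
  | abs {t u : Tm Sig} : Beta t u → Beta (Tm.lam t) (Tm.lam u)
  | appL {t u v : Tm Sig} : Beta t u → Beta (Tm.app t v) (Tm.app u v)
  | appR {t u v : Tm Sig} : Beta t u → Beta (Tm.app v t) (Tm.app v u)
  | substC (σ : ℕ → Tm Sig) {t u : Tm Sig} : Beta t u → Beta (Tm.subst σ t) (Tm.subst σ u)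

/-- Tait–Martin-Löf parallel β-reduction: the smallest parallel rewrite relation
with `(λ.t₁) t₂ ▷β u₁[0 := u₂]` whenever `t₁ ▷β u₁` and `t₂ ▷β u₂`. -/
inductive PBeta {Sig : Type} : Tm Sig → Tm Sig → Prop
  | var (n : ℕ) : PBeta (Tm.var n) (Tm.var n)
  | sym (f : Sig) : PBeta (Tm.sym f) (Tm.sym f)
  | app {t₁ u₁ t₂ u₂ : Tm Sig} : PBeta t₁ u₁ → PBeta t₂ u₂ →
      PBeta (Tm.app t₁ t₂) (Tm.app u₁ u₂)
  | abs {t u : Tm Sig} : PBeta t u → PBeta (Tm.lam t) (Tm.lam u)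
  | substC (σ : ℕ → Tm Sig) {t u : Tm Sig} : PBeta t u → PBeta (Tm.subst σ t) (Tm.subst σ u)
  | beta {t₁ u₁ t₂ u₂ : Tm Sig} : PBeta t₁ u₁ → PBeta t₂ u₂ →
      PBeta (Tm.app (Tm.lam t₁) t₂) (Tm.subst1 u₂ u₁)

/-- β-normal forms. -/
def BetaNormal {Sig : Type} (t : Tm Sig) : Prop := ∀ u, ¬ Beta t u

/-- `IsBnf t n` : `n` is a β-normal form of `t`. -/
def IsBnf {Sig : Type} (t n : Tm Sig) : Prop :=
  Relation.ReflTransGen Beta t n ∧ BetaNormal n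

/-- Weakly β-normalizing terms. -/
def WNbeta {Sig : Type} (t : Tm Sig) : Prop := ∃ n, IsBnf t n

/-- Conditional rewrite rule `d1 = c1 ∧ … ∧ dn = cn ⊃ l ↦ r`:  every variable of
the `di`, `ci` and `r` occurs in `l`, and `l` is a non-variable algebraic term. -/
structure CondRule (Sig : Type) where
  conds : List (Tm Sig × Tm Sig)
  lhs : Tm Sig
  rhs : Tm Sig
  lhs_alg : Tm.Algebraic lhs
  lhs_not_var : ∀ n, lhs ≠ Tm.var n
  fv_conds : ∀ p ∈ conds,
    (∀ n, Tm.FVar p.1 n → Tm.FVar lhs n) ∧ (∀ n, Tm.FVar p.2 n → Tm.FVar lhs n)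
  fv_rhs : ∀ n, Tm.FVar rhs n → Tm.FVar lhs n

/-- Joinability: a common reduct. -/
def Joinable {α : Type} (R : α → α → Prop) (t u : α) : Prop :=
  ∃ v, Relation.ReflTransGen R t v ∧ Relation.ReflTransGen R u v

/-- One stratum of conditional rewriting: the smallest rewrite relation such that
`lσ → rσ` for every rule whose conditions are joinable w.r.t. `prev`. -/
inductive CondStep {Sig : Type} (Rules : Set (CondRule Sig))
    (prev : Tm Sig → Tm Sig → Prop) : Tm Sig → Tm Sig → Prop
  | rule {ρ : CondRule Sig} (hρ : ρ ∈ Rules) (σ : ℕ → Tm Sig)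
      (hconds : ∀ p ∈ ρ.conds, Joinable prev (Tm.subst σ p.1) (Tm.subst σ p.2)) :
      CondStep Rules prev (Tm.subst σ ρ.lhs) (Tm.subst σ ρ.rhs)
  | abs {t u : Tm Sig} : CondStep Rules prev t u →
      CondStep Rules prev (Tm.lam t) (Tm.lam u)
  | appL {t u v : Tm Sig} : CondStep Rules prev t u →
      CondStep Rules prev (Tm.app t v) (Tm.app u v)
  | appR {t u v : Tm Sig} : CondStep Rules prev t u →
      CondStep Rules prev (Tm.app v t) (Tm.app v u)
  | substC (σ : ℕ → Tm Sig) {t u : Tm Sig} : CondStep Rules prev t u →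
      CondStep Rules prev (Tm.subst σ t) (Tm.subst σ u)

/-- Stratified conditional rewriting `→_{R_i}`. -/
def CondRel {Sig : Type} (Rules : Set (CondRule Sig)) : ℕ → Tm Sig → Tm Sig → Prop
  | 0 => fun _ _ => False
  | i + 1 => CondStep Rules (CondRel Rules i)

/-- Conditional rewriting `→_R = ⋃ i, →_{R_i}`. -/
def CondRew {Sig : Type} (Rules : Set (CondRule Sig)) (t u : Tm Sig) : Prop :=
  ∃ i, CondRel Rules i t u

/-- Stratified β-conditional rewriting `→_{R(β)_i}`: conditions are evaluated
w.r.t. `→_{β ∪ R(β)_{i-1}}`. -/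
def BCondRel {Sig : Type} (Rules : Set (CondRule Sig)) : ℕ → Tm Sig → Tm Sig → Prop
  | 0 => fun _ _ => False
  | i + 1 => CondStep Rules (fun a b => Beta a b ∨ BCondRel Rules i a b)

/-- β-conditional rewriting `→_{R(β)} = ⋃ i, →_{R(β)_i}`. -/
def BCondRew {Sig : Type} (Rules : Set (CondRule Sig)) (t u : Tm Sig) : Prop :=
  ∃ i, BCondRel Rules i t u

def IsConfluent {α : Type} (R : α → α → Prop) : Prop :=
  ∀ t u v, Relation.ReflTransGen R t u → Relation.ReflTransGen R t v →
    ∃ w, Relation.ReflTransGen R u w ∧ Relation.ReflTransGen R v w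

def ConfluentOn {α : Type} (S : Set α) (R : α → α → Prop) : Prop :=
  ∀ t ∈ S, ∀ u v, Relation.ReflTransGen R t u → Relation.ReflTransGen R t v →
    ∃ w, Relation.ReflTransGen R u w ∧ Relation.ReflTransGen R v w

def Commutes {α : Type} (R₁ R₂ : α → α → Prop) : Prop :=
  ∀ s u t, Relation.ReflTransGen R₁ s u → Relation.ReflTransGen R₂ s t →
    ∃ v, Relation.ReflTransGen R₂ u v ∧ Relation.ReflTransGen R₁ t v

def LeftLinear {Sig : Type} (Rules : Set (CondRule Sig)) : Prop :=
  ∀ ρ ∈ Rules, Tm.LinearTm ρ.lhs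

/-- Semi-closed systems: in every rule the `ci` are closed applicative terms. -/
def SemiClosed {Sig : Type} (Rules : Set (CondRule Sig)) : Prop :=
  ∀ ρ ∈ Rules, ∀ p ∈ ρ.conds, Tm.Applicative p.2 ∧ Tm.ClosedTm p.2

def RightApplicative {Sig : Type} (Rules : Set (CondRule Sig)) : Prop :=
  ∀ ρ ∈ Rules, Tm.Applicative ρ.rhs

def RightAlgebraic {Sig : Type} (Rules : Set (CondRule Sig)) : Prop :=
  ∀ ρ ∈ Rules, Tm.Algebraic ρ.rhs

/-- Algebraic systems: in every rule the `di`, `ci` and `r` are algebraic. -/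
def AlgebraicSys {Sig : Type} (Rules : Set (CondRule Sig)) : Prop :=
  ∀ ρ ∈ Rules, (∀ p ∈ ρ.conds, Tm.Algebraic p.1 ∧ Tm.Algebraic p.2) ∧ Tm.Algebraic ρ.rhs

/-- A term respects the arity `a` if it contains no subterm `f t1 … tn` with `n > a f`. -/
def RespectsArity {Sig : Type} (a : Sig → ℕ) (t : Tm Sig) : Prop :=
  ∀ (f : Sig) (ts : List (Tm Sig)),
    Tm.Subterm (Tm.appList (Tm.sym f) ts) t → ts.length ≤ a f

/-- A conditional rule respects `a` if the `di`, `ci` and both sides of `l ↦ r`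
respect `a`, and `l = f l1 … lk` with `k = a f`. -/
def RuleRespectsArity {Sig : Type} (a : Sig → ℕ) (ρ : CondRule Sig) : Prop :=
  (∀ p ∈ ρ.conds, RespectsArity a p.1 ∧ RespectsArity a p.2) ∧
  RespectsArity a ρ.lhs ∧ RespectsArity a ρ.rhs ∧
  ∃ (f : Sig) (ls : List (Tm Sig)), ρ.lhs = Tm.appList (Tm.sym f) ls ∧ ls.length = a f

def SysRespectsArity {Sig : Type} (a : Sig → ℕ) (Rules : Set (CondRule Sig)) : Prop :=
  ∀ ρ ∈ Rules, RuleRespectsArity a ρ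

/-- `AN_a` : terms having a β-normal form, whose β-normal form respects `a`. -/
def ANset {Sig : Type} (a : Sig → ℕ) : Set (Tm Sig) :=
  {t | ∃ n, IsBnf t n ∧ RespectsArity a n}

/-- The rewrite relation of the unconditional system `R̄` containing `l ↦ di` and
`l ↦ r` for each rule `d⃗ = c⃗ ⊃ l ↦ r` of `R`. -/
inductive BarRel {Sig : Type} (Rules : Set (CondRule Sig)) : Tm Sig → Tm Sig → Prop
  | ruleCond {ρ : CondRule Sig} (hρ : ρ ∈ Rules) {p : Tm Sig × Tm Sig} (hp : p ∈ ρ.conds)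
      (σ : ℕ → Tm Sig) : BarRel Rules (Tm.subst σ ρ.lhs) (Tm.subst σ p.1)
  | ruleRhs {ρ : CondRule Sig} (hρ : ρ ∈ Rules) (σ : ℕ → Tm Sig) :
      BarRel Rules (Tm.subst σ ρ.lhs) (Tm.subst σ ρ.rhs)
  | abs {t u : Tm Sig} : BarRel Rules t u → BarRel Rules (Tm.lam t) (Tm.lam u)
  | appL {t u v : Tm Sig} : BarRel Rules t u → BarRel Rules (Tm.app t v) (Tm.app u v)
  | appR {t u v : Tm Sig} : BarRel Rules t u → BarRel Rules (Tm.app v t) (Tm.app v u)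
  | substC (σ : ℕ → Tm Sig) {t u : Tm Sig} : BarRel Rules t u →
      BarRel Rules (Tm.subst σ t) (Tm.subst σ u)

/-- Conditionally `(R, a)`-stable sets of terms. -/
def CondStable {Sig : Type} (Rules : Set (CondRule Sig)) (a : Sig → ℕ)
    (S : Set (Tm Sig)) : Prop :=
  (∀ t ∈ S, RespectsArity a t) ∧
  (∀ t ∈ S, ∀ u, (Beta t u ∨ BarRel Rules t u) → u ∈ S) ∧
  (∀ t ∈ S, ∀ u, Tm.Subterm u t → u ∈ S)

/-- Head β-step along an application spine. -/
inductive HeadAux {Sig : Type} : Tm Sig → Tm Sig → Prop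
  | beta (b a₀ : Tm Sig) : HeadAux (Tm.app (Tm.lam b) a₀) (Tm.subst1 a₀ b)
  | app {t u : Tm Sig} (v : Tm Sig) : HeadAux t u → HeadAux (Tm.app t v) (Tm.app u v)

/-- Head β-reduction `→h` : `λx⃗.(λy.b) a₀ a₁ … aₙ →h λx⃗.b[y:=a₀] a₁ … aₙ`. -/
inductive HeadRed {Sig : Type} : Tm Sig → Tm Sig → Prop
  | base {t u : Tm Sig} : HeadAux t u → HeadRed t u
  | lam {t u : Tm Sig} : HeadRed t u → HeadRed (Tm.lam t) (Tm.lam u)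

/-- The relation `≻` : (a) `λx⃗.v a1 … an ≻ ai` for `v` a variable or a symbol and
`n > 0`; (b) `λx⃗.(λy.b) a0 a1 … an ≻ λx⃗.b[y:=a0] a1 … an` (a head β-step). -/
def SuccRel {Sig : Type} (t u : Tm Sig) : Prop :=
  (∃ (m : ℕ) (h : Tm Sig) (args : List (Tm Sig)),
    ((∃ n, h = Tm.var n) ∨ (∃ f, h = Tm.sym f)) ∧ args ≠ [] ∧
    t = Tm.lamN m (Tm.appList h args) ∧ u ∈ args)
  ∨ HeadRed t u

/-- The nested parallelization `▷_{R_i}` of `→_{R_i}`: the smallest parallel rewrite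
relation with `lσ ▷ rτ` whenever `lσ →_{R_i} rσ` and `σ ▷ τ`. -/
inductive NPar {Sig : Type} (Rules : Set (CondRule Sig)) (i : ℕ) : Tm Sig → Tm Sig → Prop
  | var (n : ℕ) : NPar Rules i (Tm.var n) (Tm.var n)
  | sym (f : Sig) : NPar Rules i (Tm.sym f) (Tm.sym f)
  | app {t₁ u₁ t₂ u₂ : Tm Sig} : NPar Rules i t₁ u₁ → NPar Rules i t₂ u₂ →
      NPar Rules i (Tm.app t₁ t₂) (Tm.app u₁ u₂)
  | abs {t u : Tm Sig} : NPar Rules i t u → NPar Rules i (Tm.lam t) (Tm.lam u)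
  | substC (σ : ℕ → Tm Sig) {t u : Tm Sig} : NPar Rules i t u →
      NPar Rules i (Tm.subst σ t) (Tm.subst σ u)
  | rule {ρ : CondRule Sig} (hρ : ρ ∈ Rules) (σ τ : ℕ → Tm Sig)
      (hstep : CondRel Rules i (Tm.subst σ ρ.lhs) (Tm.subst σ ρ.rhs))
      (hστ : ∀ n, NPar Rules i (σ n) (τ n)) :
      NPar Rules i (Tm.subst σ ρ.lhs) (Tm.subst τ ρ.rhs)

/-- The smallest parallel rewrite relation containing `R`. -/
inductive ParCl {Sig : Type} (R : Tm Sig → Tm Sig → Prop) : Tm Sig → Tm Sig → Prop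
  | base {t u : Tm Sig} : R t u → ParCl R t u
  | var (n : ℕ) : ParCl R (Tm.var n) (Tm.var n)
  | sym (f : Sig) : ParCl R (Tm.sym f) (Tm.sym f)
  | app {t₁ u₁ t₂ u₂ : Tm Sig} : ParCl R t₁ u₁ → ParCl R t₂ u₂ →
      ParCl R (Tm.app t₁ t₂) (Tm.app u₁ u₂)
  | abs {t u : Tm Sig} : ParCl R t u → ParCl R (Tm.lam t) (Tm.lam u)
  | substC (σ : ℕ → Tm Sig) {t u : Tm Sig} : ParCl R t u →
      ParCl R (Tm.subst σ t) (Tm.subst σ u)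

/-- A rooted β-conditional rewrite step `lσ →_{R(β)_i} rσ` for the rule `ρ` and the
substitution `σ`: `ρ ∈ R` and the conditions of `ρ` instantiated by `σ` are joinable
w.r.t. `→_{β ∪ R(β)_{i-1}}`. -/
def RootedBStep {Sig : Type} (Rules : Set (CondRule Sig)) :
    ℕ → CondRule Sig → (ℕ → Tm Sig) → Prop
  | 0 => fun _ _ => False
  | i + 1 => fun ρ σ => ρ ∈ Rules ∧
      ∀ p ∈ ρ.conds,
        Joinable (fun a b => Beta a b ∨ BCondRel Rules i a b)
          (Tm.subst σ p.1) (Tm.subst σ p.2)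

/-- Subterm at a position (positions only descend through applications, which is
enough for algebraic left-hand sides). -/
def subtermAt {Sig : Type} : Tm Sig → List Bool → Option (Tm Sig)
  | t, [] => some t
  | Tm.app a _, false :: p => subtermAt a p
  | Tm.app _ b, true :: p => subtermAt b p
  | _, _ :: _ => none

/-- Replacement at a position. -/
def replaceAt {Sig : Type} : Tm Sig → List Bool → Tm Sig → Option (Tm Sig)
  | _, [], s => some s
  | Tm.app a b, false :: p, s => (replaceAt a p s).map (fun a' => Tm.app a' b)
  | Tm.app a b, true :: p, s => (replaceAt b p s).map (fun b' => Tm.app a b')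
  | _, _ :: _, _ => none

/-- Conditional critical pairs: an overlap of `ρ₂` at a non-variable position `p` of
the left-hand side of `ρ₁` via a most general unifier (here presented with a pair of
substitutions, which accounts for variable-disjoint renamings). -/
def CriticalPair {Sig : Type} (Rules : Set (CondRule Sig))
    (conds : List (Tm Sig × Tm Sig)) (s t : Tm Sig) : Prop :=
  ∃ ρ₁ ∈ Rules, ∃ ρ₂ ∈ Rules, ∃ (p : List Bool) (w : Tm Sig) (σ₁ σ₂ : ℕ → Tm Sig),
    subtermAt ρ₁.lhs p = some w ∧
    (∀ n, w ≠ Tm.var n) ∧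
    ¬ (ρ₁ = ρ₂ ∧ p = []) ∧
    Tm.subst σ₁ w = Tm.subst σ₂ ρ₂.lhs ∧
    (∀ τ₁ τ₂ : ℕ → Tm Sig, Tm.subst τ₁ w = Tm.subst τ₂ ρ₂.lhs →
      ∃ δ : ℕ → Tm Sig, (∀ n, Tm.FVar ρ₁.lhs n → τ₁ n = Tm.subst δ (σ₁ n)) ∧
        (∀ n, Tm.FVar ρ₂.lhs n → τ₂ n = Tm.subst δ (σ₂ n))) ∧
    conds = ρ₁.conds.map (fun q => (Tm.subst σ₁ q.1, Tm.subst σ₁ q.2)) ++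
            ρ₂.conds.map (fun q => (Tm.subst σ₂ q.1, Tm.subst σ₂ q.2)) ∧
    replaceAt (Tm.subst σ₁ ρ₁.lhs) p (Tm.subst σ₂ ρ₂.rhs) = some s ∧
    t = Tm.subst σ₁ ρ₁.rhs

/-- A symbol is defined if it heads the left-hand side of some rule. -/
def DefinedSym {Sig : Type} (Rules : Set (CondRule Sig)) (f : Sig) : Prop :=
  ∃ ρ ∈ Rules, ∃ ts : List (Tm Sig), ρ.lhs = Tm.appList (Tm.sym f) ts

/-- OrthonormalSys systems. -/
def OrthonormalSys {Sig : Type} (Rules : Set (CondRule Sig)) : Prop :=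
  LeftLinear Rules ∧
  (∀ ρ ∈ Rules, ∀ p ∈ ρ.conds, Tm.ClosedTm p.2 ∧ BetaNormal p.2 ∧
    ∀ f, DefinedSym Rules f → ¬ Tm.Subterm (Tm.sym f) p.2) ∧
  (∀ (conds : List (Tm Sig × Tm Sig)) (s t : Tm Sig), CriticalPair Rules conds s t →
    ∃ i j : Fin conds.length, i ≠ j ∧
      (conds.get i).1 = (conds.get j).1 ∧ (conds.get i).2 ≠ (conds.get j).2)

/-- Dershowitz–Manna multiset extension of `<` on `ℕ`. -/
def MulLt (s t : Multiset ℕ) : Prop :=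
  ∃ X Y Z : Multiset ℕ, Y ≠ 0 ∧ s = Z + X ∧ t = Z + Y ∧ ∀ x ∈ X, ∃ y ∈ Y, x < y

/-! ### Substitution calculus -/

namespace Tm

variable {Sig : Type}

/-- Lift a renaming of de Bruijn indices under one binder. -/
def upr (ξ : ℕ → ℕ) : ℕ → ℕ
  | 0 => 0
  | n + 1 => ξ n + 1

/-- Apply a renaming to the free de Bruijn indices of a term. Renamings are treated apart from
substitutions because `up` is itself defined through the renaming `lift 0`. -/
def ren (ξ : ℕ → ℕ) : Tm Sig → Tm Sig
  | var n => var (ξ n)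
  | app t u => app (ren ξ t) (ren ξ u)
  | lam t => lam (ren (upr ξ) t)
  | sym f => sym f

theorem lift_eq_ren (t : Tm Sig) (d : ℕ) :
    lift d t = ren (fun n => if n < d then n else n + 1) t := by
  induction t generalizing d with
  | var n => simp only [lift, ren]; split <;> rfl
  | app t u iht ihu => simp only [lift, ren, iht, ihu]
  | lam t ih =>
    simp only [lift, ren, ih]
    congr 2
    funext n
    cases n with
    | zero => simp [upr]
    | succ n => simp only [upr, Nat.add_lt_add_iff_right]; split <;> rfl
  | sym f => rfl

theorem lift_zero (t : Tm Sig) : lift 0 t = ren Nat.succ t := by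
  rw [lift_eq_ren]; simp

theorem ren_ren (t : Tm Sig) (ξ ζ : ℕ → ℕ) : ren ζ (ren ξ t) = ren (fun n => ζ (ξ n)) t := by
  induction t generalizing ξ ζ with
  | var n => rfl
  | app t u iht ihu => simp only [ren, iht, ihu]
  | lam t ih =>
    simp only [ren, ih]
    congr 2
    funext n
    cases n <;> rfl
  | sym f => rfl

theorem subst_ren (t : Tm Sig) (ξ : ℕ → ℕ) (σ : ℕ → Tm Sig) :
    subst σ (ren ξ t) = subst (fun n => σ (ξ n)) t := by
  induction t generalizing ξ σ with
  | var n => rfl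
  | app t u iht ihu => simp only [ren, subst, iht, ihu]
  | lam t ih =>
    simp only [ren, subst, ih]
    congr 2
    funext n
    cases n <;> rfl
  | sym f => rfl

theorem ren_subst (t : Tm Sig) (σ : ℕ → Tm Sig) (ξ : ℕ → ℕ) :
    ren ξ (subst σ t) = subst (fun n => ren ξ (σ n)) t := by
  induction t generalizing ξ σ with
  | var n => rfl
  | app t u iht ihu => simp only [ren, subst, iht, ihu]
  | lam t ih =>
    simp only [ren, subst, ih]
    congr 2
    funext n
    cases n with
    | zero => rfl
    | succ n => simp only [up, lift_zero, ren_ren]; rfl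
  | sym f => rfl

theorem subst_subst (t : Tm Sig) (σ τ : ℕ → Tm Sig) :
    subst τ (subst σ t) = subst (fun n => subst τ (σ n)) t := by
  induction t generalizing σ τ with
  | var n => rfl
  | app t u iht ihu => simp only [subst, iht, ihu]
  | lam t ih =>
    simp only [subst, ih]
    congr 2
    funext n
    cases n with
    | zero => rfl
    | succ n => simp only [up, lift_zero, subst_ren, ren_subst]
  | sym f => rfl

theorem subst_var (t : Tm Sig) : subst var t = t := by
  have hup : up (var : ℕ → Tm Sig) = var := by
    funext n
    cases n <;> simp [up, lift]
  induction t with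
  | var n => rfl
  | app t u iht ihu => simp only [subst, iht, ihu]
  | lam t ih => simp only [subst, hup, ih]
  | sym f => rfl

theorem ren_subst1 (ξ : ℕ → ℕ) (u t : Tm Sig) :
    ren ξ (subst1 u t) = subst1 (ren ξ u) (ren (upr ξ) t) := by
  simp only [subst1, ren_subst, subst_ren]
  congr 1
  funext n
  cases n <;> rfl

theorem subst_subst1 (σ : ℕ → Tm Sig) (u t : Tm Sig) :
    subst σ (subst1 u t) = subst1 (subst σ u) (subst (up σ) t) := by
  simp only [subst1, subst_subst]
  congr 1
  funext n
  cases n with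
  | zero => rfl
  | succ n => simp only [up, scons, lift_zero, subst_ren, subst]; exact (subst_var _).symm

end Tm

/-! ### Parallel reduction without the substitution rule -/

/-- Parallel β-reduction generated by the same rules as `PBeta` except closure under substitution.
Every rule follows the top-level shape of its source term, so case analysis on that term inverts
the relation; `PBeta.substC` does not allow this. -/
inductive SPBeta {Sig : Type} : Tm Sig → Tm Sig → Prop
  | var (n : ℕ) : SPBeta (Tm.var n) (Tm.var n)
  | sym (f : Sig) : SPBeta (Tm.sym f) (Tm.sym f)
  | app {t₁ u₁ t₂ u₂ : Tm Sig} : SPBeta t₁ u₁ → SPBeta t₂ u₂ →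
      SPBeta (Tm.app t₁ t₂) (Tm.app u₁ u₂)
  | abs {t u : Tm Sig} : SPBeta t u → SPBeta (Tm.lam t) (Tm.lam u)
  | beta {t₁ u₁ t₂ u₂ : Tm Sig} : SPBeta t₁ u₁ → SPBeta t₂ u₂ →
      SPBeta (Tm.app (Tm.lam t₁) t₂) (Tm.subst1 u₂ u₁)

section Reduction

variable {Sig : Type}

theorem SPBeta.refl (t : Tm Sig) : SPBeta t t := by
  induction t with
  | var n => exact .var n
  | app t u iht ihu => exact .app iht ihu
  | lam t ih => exact .abs ih
  | sym f => exact .sym f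

theorem SPBeta.ren {t u : Tm Sig} (h : SPBeta t u) (ξ : ℕ → ℕ) :
    SPBeta (Tm.ren ξ t) (Tm.ren ξ u) := by
  induction h generalizing ξ with
  | var n => exact .var _
  | sym f => exact .sym f
  | app _ _ ih₁ ih₂ => exact .app (ih₁ ξ) (ih₂ ξ)
  | abs _ ih => exact .abs (ih _)
  | beta _ _ ih₁ ih₂ =>
    rw [Tm.ren_subst1]
    exact .beta (ih₁ _) (ih₂ ξ)

theorem SPBeta.up {σ τ : ℕ → Tm Sig} (h : ∀ n, SPBeta (σ n) (τ n)) (n : ℕ) :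
    SPBeta (Tm.up σ n) (Tm.up τ n) := by
  cases n with
  | zero => exact .var 0
  | succ n =>
    simp only [Tm.up, Tm.lift_zero]
    exact (h n).ren _

theorem SPBeta.subst {t u : Tm Sig} (h : SPBeta t u) {σ τ : ℕ → Tm Sig}
    (hστ : ∀ n, SPBeta (σ n) (τ n)) : SPBeta (Tm.subst σ t) (Tm.subst τ u) := by
  induction h generalizing σ τ with
  | var n => exact hστ n
  | sym f => exact .sym f
  | app _ _ ih₁ ih₂ => exact .app (ih₁ hστ) (ih₂ hστ)
  | abs _ ih => exact .abs (ih (SPBeta.up hστ))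
  | beta _ _ ih₁ ih₂ =>
    rw [Tm.subst_subst1]
    exact .beta (ih₁ (SPBeta.up hστ)) (ih₂ hστ)

theorem SPBeta.subst1 {t t' u u' : Tm Sig} (ht : SPBeta t t') (hu : SPBeta u u') :
    SPBeta (Tm.subst1 u t) (Tm.subst1 u' t') := by
  refine ht.subst fun n => ?_
  cases n with
  | zero => exact hu
  | succ n => exact .var n

theorem pbeta_iff_spbeta {t u : Tm Sig} : PBeta t u ↔ SPBeta t u := by
  constructor
  · intro h
    induction h with
    | var n => exact .var n
    | sym f => exact .sym f
    | app _ _ ih₁ ih₂ => exact .app ih₁ ih₂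
    | abs _ ih => exact .abs ih
    | substC σ _ ih => exact ih.subst fun n => .refl _
    | beta _ _ ih₁ ih₂ => exact .beta ih₁ ih₂
  · intro h
    induction h with
    | var n => exact .var n
    | sym f => exact .sym f
    | app _ _ ih₁ ih₂ => exact .app ih₁ ih₂
    | abs _ ih => exact .abs ih
    | beta _ _ ih₁ ih₂ => exact .beta ih₁ ih₂

theorem Beta.spbeta {t u : Tm Sig} (h : Beta t u) : SPBeta t u := by
  induction h with
  | beta t u => exact .beta (.refl t) (.refl u)
  | abs _ ih => exact .abs ih
  | appL _ ih => exact .app ih (.refl _)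
  | appR _ ih => exact .app (.refl _) ih
  | substC σ _ ih => exact ih.subst fun n => .refl _

theorem SPBeta.reds {t u : Tm Sig} (h : SPBeta t u) : Relation.ReflTransGen Beta t u := by
  have app_reds {a a' b b' : Tm Sig} (ha : Relation.ReflTransGen Beta a a')
      (hb : Relation.ReflTransGen Beta b b') :
      Relation.ReflTransGen Beta (Tm.app a b) (Tm.app a' b') :=
    (ha.lift (fun x => Tm.app x b) fun _ _ => .appL).trans
      (hb.lift (fun x => Tm.app a' x) fun _ _ => .appR)
  induction h with
  | var n => exact .refl
  | sym f => exact .refl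
  | app _ _ ih₁ ih₂ => exact app_reds ih₁ ih₂
  | abs _ ih => exact ih.lift Tm.lam fun _ _ => .abs
  | beta _ _ ih₁ ih₂ =>
    exact (app_reds (ih₁.lift Tm.lam fun _ _ => .abs) ih₂).tail (.beta _ _)

/-! ### Complete developments -/

/-- The complete development of a term: all its β-redexes are contracted simultaneously. -/
def Tm.cd : Tm Sig → Tm Sig
  | .var n => .var n
  | .app (.lam t) u => Tm.subst1 (Tm.cd u) (Tm.cd t)
  | .app t u => .app (Tm.cd t) (Tm.cd u)
  | .lam t => .lam (Tm.cd t)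
  | .sym f => .sym f

theorem Tm.cd_app {t : Tm Sig} (ht : ∀ b, t ≠ Tm.lam b) (u : Tm Sig) :
    Tm.cd (Tm.app t u) = Tm.app (Tm.cd t) (Tm.cd u) := by
  cases t with
  | lam b => exact absurd rfl (ht b)
  | _ => simp only [Tm.cd]

/-- Takahashi's triangle property. -/
theorem SPBeta.triangle {t u : Tm Sig} (h : SPBeta t u) : SPBeta u (Tm.cd t) := by
  induction h with
  | var n => exact .var n
  | sym f => exact .sym f
  | @app t₁ u₁ t₂ u₂ h₁ h₂ ih₁ ih₂ =>
    by_cases hl : ∃ b, t₁ = Tm.lam b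
    · obtain ⟨b, rfl⟩ := hl
      cases h₁ with
      | abs _ =>
        simp only [Tm.cd] at ih₁ ⊢
        cases ih₁ with
        | abs ih => exact .beta ih ih₂
    · rw [Tm.cd_app (not_exists.mp hl)]
      exact .app ih₁ ih₂
  | abs _ ih => simpa only [Tm.cd] using SPBeta.abs ih
  | beta _ _ ih₁ ih₂ => simpa only [Tm.cd] using ih₁.subst1 ih₂

theorem spbeta_cd (t : Tm Sig) : SPBeta t (Tm.cd t) := (SPBeta.refl t).triangle

theorem reds_iterate_cd (n : ℕ) (t : Tm Sig) : Relation.ReflTransGen Beta t (Tm.cd^[n] t) := by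
  induction n with
  | zero => exact .refl
  | succ n ih =>
    rw [Function.iterate_succ_apply']
    exact ih.trans (spbeta_cd _).reds

/-- Complete development is monotone for `→β*`: if `t →β u` then `u ▷β cd t`, and the triangle
property applied to this step gives `cd t ▷β cd u`. -/
theorem reds_cd_cd {t u : Tm Sig} (h : Relation.ReflTransGen Beta t u) :
    Relation.ReflTransGen Beta (Tm.cd t) (Tm.cd u) := by
  induction h with
  | refl => exact .refl
  | tail _ hs ih => exact ih.trans hs.spbeta.triangle.triangle.reds

/-- Iterated complete developments are cofinal among the β-reducts of a term. -/
theorem exists_reds_iterate_cd {t u : Tm Sig} (h : Relation.ReflTransGen Beta t u) :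
    ∃ m, ∀ n, m ≤ n → Relation.ReflTransGen Beta u (Tm.cd^[n] t) := by
  induction h with
  | refl => exact ⟨0, fun n _ => reds_iterate_cd n t⟩
  | tail _ hs ih =>
    obtain ⟨m, hm⟩ := ih
    refine ⟨m + 1, fun n hn => ?_⟩
    obtain ⟨n, rfl⟩ : ∃ k, n = k + 1 := ⟨n - 1, by omega⟩
    rw [Function.iterate_succ_apply']
    exact hs.spbeta.triangle.reds.trans (reds_cd_cd (hm n (by omega)))

/-! ### Algebraic terms -/

theorem Tm.subst_appList (σ : ℕ → Tm Sig) (ts : List (Tm Sig)) (h : Tm Sig) :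
    Tm.subst σ (Tm.appList h ts) = Tm.appList (Tm.subst σ h) (ts.map (Tm.subst σ)) := by
  induction ts generalizing h with
  | nil => rfl
  | cons t ts ih => exact ih _

theorem Tm.cd_appList (ts : List (Tm Sig)) {h : Tm Sig} (hh : ∀ b, h ≠ Tm.lam b) :
    Tm.cd (Tm.appList h ts) = Tm.appList (Tm.cd h) (ts.map Tm.cd) := by
  induction ts generalizing h with
  | nil => rfl
  | cons t ts ih =>
    simp only [Tm.appList, List.map_cons]
    rw [ih (fun b => by simp), Tm.cd_app hh]

theorem cd_subst_algebraic {t : Tm Sig} (ht : Tm.Algebraic t) (σ : ℕ → Tm Sig) :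
    Tm.cd (Tm.subst σ t) = Tm.subst (fun n => Tm.cd (σ n)) t := by
  induction ht with
  | var n => rfl
  | symApp f ts _ ih =>
    rw [Tm.subst_appList, Tm.subst_appList, Tm.subst, Tm.cd_appList _ (fun b => by simp)]
    simp only [Tm.cd, Tm.subst, List.map_map]
    congr 1
    exact List.map_congr_left ih

theorem iterate_cd_subst_algebraic {t : Tm Sig} (ht : Tm.Algebraic t) (σ : ℕ → Tm Sig) (n : ℕ) :
    Tm.cd^[n] (Tm.subst σ t) = Tm.subst (fun x => Tm.cd^[n] (σ x)) t := by
  induction n with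
  | zero => rfl
  | succ n ih => simp only [Function.iterate_succ_apply', ih, cd_subst_algebraic ht]

end Reduction

/-- For algebraic terms `t₁, …, tₖ` (not necessarily linear) and a
substitution `σ`: (1) if `tᵢσ ▷β uᵢ` for all `i`, then there is `σ'` with `σ ▷β σ'`
and `uᵢ ▷β tᵢσ'` for all `i`; (2) similarly with `→β*` in place of `▷β`. -/
theorem beta_algebraic_subst {Sig : Type} (k : ℕ) (t : Fin k → Tm Sig)
    (halg : ∀ i, Tm.Algebraic (t i)) (σ : ℕ → Tm Sig) :
    ((∀ u : Fin k → Tm Sig, (∀ i, PBeta (Tm.subst σ (t i)) (u i)) →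
        ∃ σ' : ℕ → Tm Sig, (∀ n, PBeta (σ n) (σ' n)) ∧
          ∀ i, PBeta (u i) (Tm.subst σ' (t i))) ∧
     (∀ u : Fin k → Tm Sig, (∀ i, Relation.ReflTransGen Beta (Tm.subst σ (t i)) (u i)) →
        ∃ σ' : ℕ → Tm Sig, (∀ n, Relation.ReflTransGen Beta (σ n) (σ' n)) ∧
          ∀ i, Relation.ReflTransGen Beta (u i) (Tm.subst σ' (t i)))) := by
  refine ⟨fun u hu => ⟨fun n => Tm.cd (σ n), fun n => ?_, fun i => ?_⟩, fun u hu => ?_⟩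
  · exact pbeta_iff_spbeta.mpr (spbeta_cd _)
  · rw [← cd_subst_algebraic (halg i)]
    exact pbeta_iff_spbeta.mpr (pbeta_iff_spbeta.mp (hu i)).triangle
  · choose m hm using fun i => exists_reds_iterate_cd (hu i)
    refine ⟨fun x => Tm.cd^[Finset.univ.sup m] (σ x), fun x => reds_iterate_cd _ _, fun i => ?_⟩
    rw [← iterate_cd_subst_algebraic (halg i)]
    exact hm i _ (Finset.le_sup (Finset.mem_univ i))
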